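/- arXiv:0811.1818 — 2 statements merged into one kernel-verified Lean document; each statement's English description precedes it below -/
import Mathlib

section
/- Let A be an invertible symmetric n×n complex matrix such that the Hermitian matrix B = A⁻¹ · conj(A⁻¹) has n pairwise distinct eigenvalues with corresponding eigenvectors w⁽¹⁾, …, w⁽ⁿ⁾. Then the variety of contacts Σ = { z ∈ ℂⁿ : ∃ μ ∈ ℂ, A z = μ · conj(z) } is the union of the n complex lines ℂ·w⁽¹⁾, …, ℂ·w⁽ⁿ⁾ together with 0. -/
/-!
For `z ≠ 0`, the contact condition `A z = μ • conj z` says that `z` is an eigenvector of the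
conjugate-linear map `T z = A⁻¹ (conj z)`, whose square is the linear map `B = A⁻¹ conj(A⁻¹)`.
If `T z = c • z` then `T (T z) = (conj c * c) • z`, so `z` is an eigenvector of `B` and lies on one
of the lines spanned by the `wᵢ`. Conversely `T` commutes with `B = T²`, so when the eigenvalue of
`wᵢ` is real, `T` preserves its eigenspace, which is the line spanned by `wᵢ` because the
eigenvalues are distinct: hence every vector of that line is an eigenvector of `T`. For symmetric
`A` the eigenvalues are real because `B = A⁻¹ (A⁻¹)ᴴ` is Hermitian.
-/

open Matrix Module

section EigenvectorBasis

variable {ι R M : Type*} [CommRing R] [AddCommGroup M] [Module R M]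
  {f : End R M} {b : Basis ι R M} {ev : ι → R}

lemma repr_apply_of_apply_basis_eq_smul (hb : ∀ i, f (b i) = ev i • b i) (x : M) (i : ι) :
    b.repr (f x) i = ev i * b.repr x i := by
  classical
  have hcoord : b.coord i ∘ₗ f = ev i • b.coord i := by
    refine b.ext fun j ↦ ?_
    obtain rfl | hji := eq_or_ne j i
    · simp [hb]
    · simp [hb, hji]
  exact LinearMap.congr_fun hcoord x

variable [IsDomain R]

lemma eq_of_apply_eq_smul_of_repr_ne_zero (hb : ∀ i, f (b i) = ev i • b i) {μ : R} {x : M}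
    (hx : f x = μ • x) {i : ι} (hi : b.repr x i ≠ 0) : ev i = μ :=
  mul_right_cancel₀ hi <| by
    rw [← repr_apply_of_apply_basis_eq_smul hb, hx, map_smul, Finsupp.smul_apply, smul_eq_mul]

lemma exists_eq_of_apply_eq_smul (hb : ∀ i, f (b i) = ev i • b i) {μ : R} {x : M}
    (hx₀ : x ≠ 0) (hx : f x = μ • x) : ∃ i, ev i = μ := by
  obtain ⟨i, hi⟩ := Finsupp.ne_iff.1 (b.repr.map_ne_zero_iff.2 hx₀)
  exact ⟨i, eq_of_apply_eq_smul_of_repr_ne_zero hb hx hi⟩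

lemma exists_eq_smul_basis_of_apply_eq_smul (hev : Function.Injective ev)
    (hb : ∀ i, f (b i) = ev i • b i) {x : M} {i : ι} (hx : f x = ev i • x) :
    ∃ t : R, x = t • b i := by
  classical
  refine ⟨b.repr x i, b.ext_elem fun j ↦ ?_⟩
  obtain rfl | hji := eq_or_ne j i
  · simp
  · have hj : b.repr x j = 0 := by
      by_contra hj
      exact hji (hev (eq_of_apply_eq_smul_of_repr_ne_zero hb hx hj))
    simp [hj, hji.symm]

end EigenvectorBasis

lemma exists_basis_of_hasEigenvector {ι K V : Type*} [Fintype ι] [Field K] [AddCommGroup V]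
    [Module K V] [FiniteDimensional K V] (hcard : Fintype.card ι = finrank K V) {f : End K V}
    {ev : ι → K} (hev : Function.Injective ev) {w : ι → V}
    (hw : ∀ i, f.HasEigenvector (ev i) (w i)) : ∃ b : Basis ι K V, ⇑b = w :=
  ⟨basisOfLinearIndependentOfCardEqFinrank' w
      (End.eigenvectors_linearIndependent' f ev hev w hw) hcard,
    coe_basisOfLinearIndependentOfCardEqFinrank' ..⟩

section ConjugateLinear

lemma apply_apply_eq_smul_of_apply_eq_smul {R M : Type*} [CommSemiring R] [StarRing R]
    [AddCommMonoid M] [Module R M] {T : M →ₗ⋆[R] M} {c : R} {z : M} (hz : T z = c • z) :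
    T (T z) = (star c * c) • z := by
  rw [hz, map_smulₛₗ, hz, smul_smul, starRingEnd_apply]

lemma exists_apply_smul_eq_smul {K V : Type*} [Field K] [StarRing K] [AddCommGroup V]
    [Module K V] {T : V →ₗ⋆[K] V} {c : K} {z : V} (hz : T z = c • z) (t : K) :
    ∃ d : K, T (t • z) = d • t • z := by
  obtain rfl | ht := eq_or_ne t 0
  · exact ⟨0, by simp⟩
  · refine ⟨star t * c / t, ?_⟩
    rw [map_smulₛₗ, hz, smul_smul, smul_smul, div_mul_cancel₀ _ ht, starRingEnd_apply]

lemma exists_apply_basis_eq_smul {ι R M : Type*} [CommRing R] [IsDomain R] [StarRing R]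
    [AddCommGroup M] [Module R M] {T : M →ₗ⋆[R] M} {b : Basis ι R M} {ev : ι → R}
    (hev : Function.Injective ev) (hT : ∀ i, T (T (b i)) = ev i • b i) {i : ι}
    (hi : IsSelfAdjoint (ev i)) : ∃ c : R, T (b i) = c • b i := by
  have hTb : (T ∘ₛₗ T) (T (b i)) = ev i • T (b i) := by
    rw [LinearMap.comp_apply, hT, map_smulₛₗ, starRingEnd_apply, hi.star_eq]
  exact exists_eq_smul_basis_of_apply_eq_smul (f := T ∘ₛₗ T) hev hT hTb

theorem exists_apply_eq_smul_iff {ι K V : Type*} [Field K] [StarRing K] [AddCommGroup V]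
    [Module K V] {T : V →ₗ⋆[K] V} {b : Basis ι K V} {ev : ι → K} (hev : Function.Injective ev)
    (hreal : ∀ i, IsSelfAdjoint (ev i)) (hT : ∀ i, T (T (b i)) = ev i • b i) {z : V} :
    (∃ c : K, T z = c • z) ↔ (∃ i, ∃ t : K, z = t • b i) ∨ z = 0 := by
  constructor
  · rintro ⟨c, hc⟩
    refine or_iff_not_imp_right.2 fun hz ↦ ?_
    have hTT : (T ∘ₛₗ T) z = (star c * c) • z := apply_apply_eq_smul_of_apply_eq_smul hc
    obtain ⟨i, hi⟩ := exists_eq_of_apply_eq_smul (f := T ∘ₛₗ T) hT hz hTT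
    exact ⟨i, exists_eq_smul_basis_of_apply_eq_smul (f := T ∘ₛₗ T) hev hT (hi ▸ hTT)⟩
  · rintro (⟨i, t, rfl⟩ | rfl)
    · obtain ⟨c, hc⟩ := exists_apply_basis_eq_smul hev hT (hreal i)
      exact exists_apply_smul_eq_smul hc t
    · exact ⟨0, by simp⟩

end ConjugateLinear

section ConjugateMulVec

/-- The conjugate-linear map `v ↦ C (conj v)` attached to a matrix `C`. Its eigenvectors are the
coneigenvectors of `C`; contacts of the foliation of `A` are those of `C = A⁻¹`. -/
def conjMulVecLin {m n R : Type*} [Fintype n] [CommSemiring R] [StarRing R] (C : Matrix m n R) :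
    (n → R) →ₗ⋆[R] (m → R) :=
  C.mulVecLin ∘ₛₗ (starLinearEquiv R : (n → R) ≃ₗ⋆[R] (n → R)).toLinearMap

lemma conjMulVecLin_apply {m n R : Type*} [Fintype n] [CommSemiring R] [StarRing R]
    (C : Matrix m n R) (v : n → R) : conjMulVecLin C v = C *ᵥ star v :=
  rfl

lemma conjMulVecLin_conjMulVecLin {l m n R : Type*} [Fintype m] [Fintype n] [CommSemiring R]
    [StarRing R] (C : Matrix l m R) (D : Matrix m n R) (v : n → R) :
    conjMulVecLin C (conjMulVecLin D v) = (C * D.map (starRingEnd R)) *ᵥ v := by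
  have hstar : star (D *ᵥ star v) = D.map (starRingEnd R) *ᵥ v := by
    ext i
    simpa [Function.comp_def, starRingEnd_apply] using (starRingEnd R).map_mulVec D (star v) i
  rw [conjMulVecLin_apply, conjMulVecLin_apply, hstar, mulVec_mulVec]

lemma exists_mulVec_eq_smul_of_mulVec_eq_smul {m n K : Type*} [Fintype m] [Fintype n]
    [DecidableEq n] [Field K] {A : Matrix m n K} {B : Matrix n m K} (hBA : B * A = 1)
    {x : n → K} {y : m → K} (hx : x ≠ 0) {c : K} (h : A *ᵥ x = c • y) :
    ∃ d : K, B *ᵥ y = d • x := by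
  have hxy : x = c • B *ᵥ y := by
    rw [← mulVec_smul, ← h, mulVec_mulVec, hBA, one_mulVec]
  have hc : c ≠ 0 := by
    rintro rfl
    exact hx (by rw [hxy, zero_smul])
  exact ⟨c⁻¹, (eq_inv_smul_iff₀ hc).2 hxy.symm⟩

lemma exists_mulVec_eq_smul_star_iff {n K : Type*} [Fintype n] [DecidableEq n] [Field K]
    [StarRing K] {A : Matrix n n K} (hdet : A.det ≠ 0) {z : n → K} :
    (∃ μ : K, A *ᵥ z = μ • star z) ↔ ∃ c : K, conjMulVecLin A⁻¹ z = c • z := by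
  have hA : IsUnit A.det := hdet.isUnit
  obtain rfl | hz := eq_or_ne z 0
  · simp
  · constructor
    · rintro ⟨μ, hμ⟩
      exact exists_mulVec_eq_smul_of_mulVec_eq_smul (nonsing_inv_mul A hA) hz hμ
    · rintro ⟨c, hc⟩
      exact exists_mulVec_eq_smul_of_mulVec_eq_smul (mul_nonsing_inv A hA) (star_ne_zero.2 hz) hc

end ConjugateMulVec

lemma isHermitian_mul_map_starRingEnd_of_isSymm {n R : Type*} [Fintype n] [CommSemiring R]
    [StarRing R] {C : Matrix n n R} (hC : C.IsSymm) :
    (C * C.map (starRingEnd R)).IsHermitian := by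
  have hmap : C.map (starRingEnd R) = Cᴴ := by
    rw [conjTranspose, hC.eq]
    rfl
  exact hmap ▸ isHermitian_mul_conjTranspose_self C

lemma isSelfAdjoint_of_isHermitian_of_mulVec_eq_smul {n 𝕜 : Type*} [Fintype n] [RCLike 𝕜]
    {B : Matrix n n 𝕜} (hB : B.IsHermitian) {v : n → 𝕜} (hv : v ≠ 0) {μ : 𝕜}
    (h : B *ᵥ v = μ • v) : IsSelfAdjoint μ := by
  classical
  have hvec : End.HasEigenvector B.toEuclideanLin μ (WithLp.toLp 2 v) :=
    End.hasEigenvector_iff.2 ⟨End.mem_eigenspace_iff.2 (by simp [h]), by simpa using hv⟩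
  exact (isSymmetric_toEuclideanLin_iff.2 hB).conj_eigenvalue_eq_self
    (End.hasEigenvalue_of_hasEigenvector hvec)

theorem stmt5_general {ι K : Type*} [Fintype ι] [DecidableEq ι] [Field K] [StarRing K]
    (A : Matrix ι ι K) (hdet : A.det ≠ 0) (ev : ι → K) (hev : Function.Injective ev)
    (hreal : ∀ i, IsSelfAdjoint (ev i)) (w : ι → ι → K) (hw : ∀ i, w i ≠ 0)
    (heig : ∀ i, (A⁻¹ * (A⁻¹).map (starRingEnd K)) *ᵥ w i = ev i • w i) :
    {z : ι → K | ∃ μ : K, A *ᵥ z = μ • star z}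
      = (⋃ i, {z : ι → K | ∃ t : K, z = t • w i}) ∪ {0} := by
  have heigvec (i : ι) :
      End.HasEigenvector (toLin' (A⁻¹ * (A⁻¹).map (starRingEnd K))) (ev i) (w i) :=
    End.hasEigenvector_iff.2 ⟨End.mem_eigenspace_iff.2 (by rw [toLin'_apply, heig]), hw i⟩
  obtain ⟨b, rfl⟩ := exists_basis_of_hasEigenvector (finrank_fintype_fun_eq_card K).symm hev heigvec
  have hT (i : ι) : conjMulVecLin A⁻¹ (conjMulVecLin A⁻¹ (b i)) = ev i • b i := by
    rw [conjMulVecLin_conjMulVecLin, heig]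
  ext z
  simp only [Set.mem_ofPred_eq, Set.mem_union, Set.mem_iUnion, Set.mem_singleton_iff]
  rw [exists_mulVec_eq_smul_star_iff hdet, exists_apply_eq_smul_iff hev hreal hT]

/-- If `B = A⁻¹ conj(A⁻¹)` has `n` pairwise distinct eigenvalues
with eigenvectors `w⁽¹⁾, …, w⁽ⁿ⁾`, the variety of contacts
`Σ = {z : ∃ μ, A z = μ conj z}` is the union of the lines `ℂ·w⁽ⁱ⁾` and `0`. -/
theorem stmt5 {n : ℕ} (A : Matrix (Fin n) (Fin n) ℂ)
    (hA : A.IsSymm) (hdet : A.det ≠ 0)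
    (ev : Fin n → ℂ) (hev : Function.Injective ev)
    (w : Fin n → Fin n → ℂ) (hw : ∀ i, w i ≠ 0)
    (heig : ∀ i, (A⁻¹ * (A⁻¹).map (starRingEnd ℂ)).mulVec (w i) = ev i • w i) :
    {z : Fin n → ℂ | ∃ μ : ℂ, A.mulVec z = μ • star z}
      = (⋃ i, {z : Fin n → ℂ | ∃ t : ℂ, z = t • w i}) ∪ {0} :=
  stmt5_general A hdet ev hev (fun i ↦ isSelfAdjoint_of_isHermitian_of_mulVec_eq_smul
    (isHermitian_mul_map_starRingEnd_of_isSymm hA.inv) (hw i) (heig i)) w hw heig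
end

section
/- Let F be a continuous vector field on the closed unit disk D² ⊂ ℝ² with no zeros on the boundary circle S¹, having only nondegenerate interior zeros, and meeting S¹ generically (finitely many tangency points, each either an interior or exterior tangency, with no inflection tangencies). Then the sum of the indices of the zeros of F in D² equals 1 + (i − e)/2, where i is the number of interior tangencies and e the number of exterior tangencies of F with S¹. -/
open scoped RealInnerProductSpace

open scoped ComplexConjugate Real
open Filter Topology Metric

/-!
On the unit circle write `F x = x ^ n * exp (M x)`, and near a zero `p` write
`F x = (x - p) ^ k * exp (L x)`: then `n` is the winding number of `F` and `k` is its index at `p`,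
which for a nondegenerate zero is the sign of the determinant of the derivative. Dividing `F` by the
powers `(x - p) ^ k` leaves a map without zeros on the disk, so `n` is the sum of the indices.

The function `I * F x / x` has winding number `n - 1`, and its argument is an integer multiple of
`π` exactly at the tangencies. Along the circle this argument crosses such a multiple upwards at an
interior tangency and downwards at an exterior one, so `i - e` half turns, that is `2 * (n - 1)`,
are made altogether.
-/

/-! ### Winding numbers and indices -/

/-- `HasWindingNumber f n` says that `f` has winding number `n` around `0` along the unit circle of
`ℂ`: there `f x = x ^ n * exp (M x)` for a continuous `M`. -/
def HasWindingNumber (f : ℂ → ℂ) (n : ℤ) : Prop :=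
  ∃ M : ℂ → ℂ, ContinuousOn M (sphere 0 1) ∧ ∀ x ∈ sphere (0 : ℂ) 1, f x = x ^ n * Complex.exp (M x)

/-- `HasIndexAt f p n` says that `n` is the index of `f` at `p`, that is the winding number of `f`
along small circles around `p`: on a punctured neighbourhood of `p`, `f x = (x - p) ^ n * exp (L x)`
with `L` continuous. The values of `f` and `L` at `p` itself play no role. -/
def HasIndexAt (f : ℂ → ℂ) (p : ℂ) (n : ℤ) : Prop :=
  ∃ L : ℂ → ℂ, ∀ᶠ x in 𝓝[≠] p, ContinuousAt L x ∧ f x = (x - p) ^ n * Complex.exp (L x)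

theorem exists_continuous_retraction_closedBall (E : Type*) [NormedAddCommGroup E]
    [NormedSpace ℝ E] :
    ∃ r : E → E, Continuous r ∧ (∀ x, r x ∈ closedBall (0 : E) 1) ∧
      ∀ x ∈ closedBall (0 : E) 1, r x = x := by
  have hpos (x : E) : 0 < max 1 ‖x‖ := lt_max_of_lt_left one_pos
  refine ⟨fun x ↦ (max 1 ‖x‖)⁻¹ • x, ?_, fun x ↦ ?_, fun x hx ↦ ?_⟩
  · exact (Continuous.inv₀ (by fun_prop) fun x ↦ (hpos x).ne').smul continuous_id
  · rw [mem_closedBall_zero_iff, norm_smul, norm_inv, Real.norm_of_nonneg (hpos x).le,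
      inv_mul_le_iff₀ (hpos x), mul_one]
    exact le_max_right _ _
  · simp [max_eq_left (mem_closedBall_zero_iff.1 hx)]

theorem exists_continuousAt_eventuallyEq_nhdsNE {E V : Type*} [NormedAddCommGroup E]
    [NormedSpace ℝ E] [HasContDiffBump E] [TopologicalSpace V] [AddCommGroup V] [Module ℝ V]
    [ContinuousSMul ℝ V] {L : E → V} {p : E} {U : Set E}
    (hL : ∀ᶠ x in 𝓝[≠] p, ContinuousAt L x) (hU : U ∈ 𝓝 p) :
    ∃ B : E → V, (∀ x ≠ p, ContinuousAt B x) ∧ B =ᶠ[𝓝[≠] p] L ∧ ∀ x ∉ U, B x = 0 := by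
  obtain ⟨r, hr, hball⟩ := eventually_nhds_iff_ball.1
    ((eventually_nhdsWithin_iff.1 hL).and (eventually_mem_set.2 hU))
  let χ : ContDiffBump p := ⟨r / 4, r / 2, by positivity, by linarith⟩
  have hχ_zero {x : E} (hx : r / 2 ≤ dist x p) : χ x = 0 := χ.zero_of_le_dist hx
  refine ⟨fun x ↦ χ x • L x, fun x hx ↦ ?_, ?_, fun x hx ↦ ?_⟩
  · rcases lt_or_ge (dist x p) r with hxr | hxr
    · exact χ.continuous.continuousAt.smul ((hball x hxr).1 hx)
    · have hfar : ∀ᶠ y in 𝓝 x, r / 2 < dist y p :=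
        (continuous_id.dist continuous_const).continuousAt.eventually_const_lt (by simp; linarith)
      refine continuousAt_const (y := (0 : V)) |>.congr ?_
      filter_upwards [hfar] with y hy
      rw [hχ_zero hy.le, zero_smul]
  · filter_upwards [χ.eventuallyEq_one.filter_mono nhdsWithin_le_nhds] with x hx
    rw [hx, Pi.one_apply, one_smul]
  · have hxr : r ≤ dist x p := not_lt.1 fun h ↦ hx (hball x h).2
    beta_reduce
    rw [hχ_zero (by linarith), zero_smul]

namespace HasWindingNumber

variable {f g : ℂ → ℂ} {m n : ℤ}

theorem mul (hf : HasWindingNumber f m) (hg : HasWindingNumber g n) :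
    HasWindingNumber (fun x ↦ f x * g x) (m + n) := by
  obtain ⟨M, hM, hfM⟩ := hf
  obtain ⟨N, hN, hgN⟩ := hg
  refine ⟨fun x ↦ M x + N x, hM.add hN, fun x hx ↦ ?_⟩
  have hx0 : x ≠ 0 := ne_of_mem_sphere hx one_ne_zero
  beta_reduce
  rw [hfM x hx, hgN x hx, zpow_add₀ hx0, Complex.exp_add]
  ring

theorem congr (hf : HasWindingNumber f n) (h : ∀ x ∈ sphere (0 : ℂ) 1, g x = f x) :
    HasWindingNumber g n := by
  obtain ⟨M, hM, hfM⟩ := hf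
  exact ⟨M, hM, fun x hx ↦ (h x hx).trans (hfM x hx)⟩

theorem const_mul_zpow {c : ℂ} (hc : c ≠ 0) (n : ℤ) : HasWindingNumber (fun x ↦ c * x ^ n) n :=
  ⟨fun _ ↦ Complex.log c, continuousOn_const, fun x _ ↦ by rw [Complex.exp_log hc, mul_comm]⟩

-- On the unit circle `x - p = x * (1 - p / x)`, and the second factor stays in the slit plane.
theorem sub_zpow {p : ℂ} (hp : p ∈ ball (0 : ℂ) 1) (n : ℤ) :
    HasWindingNumber (fun x ↦ (x - p) ^ n) n := by
  have hslit : ∀ x ∈ sphere (0 : ℂ) 1, 1 + -(p / x) ∈ Complex.slitPlane := fun x hx ↦ by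
    apply Complex.mem_slitPlane_of_norm_lt_one
    rwa [norm_neg, norm_div, mem_sphere_zero_iff_norm.1 hx, div_one, ← mem_ball_zero_iff]
  have hne : ∀ x ∈ sphere (0 : ℂ) 1, x ≠ 0 := fun x hx ↦ ne_of_mem_sphere hx one_ne_zero
  refine ⟨fun x ↦ n * Complex.log (1 + -(p / x)), ?_, fun x hx ↦ ?_⟩
  · refine continuousOn_const.mul (ContinuousOn.clog ?_ hslit)
    exact continuousOn_const.add (continuousOn_const.div continuousOn_id hne).neg
  · have hfactor : x - p = x * (1 + -(p / x)) := by field_simp [hne x hx]; ring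
    beta_reduce
    rw [hfactor, mul_zpow, Complex.exp_int_mul,
      Complex.exp_log (Complex.slitPlane_ne_zero (hslit x hx))]

theorem zero_of_continuousOn_closedBall (hf : ContinuousOn f (closedBall 0 1))
    (hf0 : ∀ x ∈ closedBall (0 : ℂ) 1, f x ≠ 0) : HasWindingNumber f 0 := by
  obtain ⟨r, hr, hr_mem, hr_id⟩ := exists_continuous_retraction_closedBall ℂ
  have hcontr : ContractibleSpace (Set.univ : Set ℂ) := convex_univ.contractibleSpace ⟨0, trivial⟩
  have hsc : IsSimplyConnected (Set.univ : Set ℂ) :=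
    (inferInstance : SimplyConnectedSpace (Set.univ : Set ℂ))
  obtain ⟨M, hM, hexp⟩ := Complex.exists_continuousOn_eqOn_exp_comp hsc isOpen_univ
    (hf.comp_continuous hr hr_mem).continuousOn (fun ⟨x, _, hx⟩ ↦ hf0 _ (hr_mem x) hx)
  refine ⟨M, hM.mono (Set.subset_univ _), fun x hx ↦ ?_⟩
  have hfx : Complex.exp (M x) = f (r x) := hexp (Set.mem_univ x)
  rw [zpow_zero, one_mul, hfx, hr_id x (sphere_subset_closedBall hx)]

theorem exists_polar (hf : HasWindingNumber f n) :
    ∃ R θ : ℝ → ℝ, (∀ t, 0 < R t) ∧ Continuous θ ∧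
      (∀ t, θ (t + 2 * π) = θ t + n * (2 * π)) ∧
      ∀ t : ℝ, f (Complex.exp (t * Complex.I)) = R t * Complex.exp (θ t * Complex.I) := by
  obtain ⟨M, hM, hfM⟩ := hf
  let X : ℝ → ℂ := fun t ↦ Complex.exp (t * Complex.I)
  have hX (t : ℝ) : X t ∈ sphere (0 : ℂ) 1 := by simp [X, Complex.norm_exp_ofReal_mul_I]
  have hMX : Continuous fun t ↦ M (X t) := hM.comp_continuous (by fun_prop) hX
  refine ⟨fun t ↦ Real.exp (M (X t)).re, fun t ↦ n * t + (M (X t)).im, fun t ↦ Real.exp_pos _,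
    (continuous_const.mul continuous_id).add (Complex.continuous_im.comp hMX),
    fun t ↦ ?_, fun t ↦ ?_⟩
  · have hper : X (t + 2 * π) = X t := by
      simp only [X]
      push_cast
      rw [add_mul, Complex.exp_add, Complex.exp_two_pi_mul_I, mul_one]
    beta_reduce
    rw [hper]
    ring
  · rw [hfM _ (hX t), ← Complex.exp_int_mul, ← Complex.exp_add, Complex.ofReal_exp,
      ← Complex.exp_add]
    congr 1
    apply Complex.ext <;> simp

end HasWindingNumber

namespace HasIndexAt

variable {f g : ℂ → ℂ} {p : ℂ} {m n : ℤ}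

theorem congr (hf : HasIndexAt f p n) (h : g =ᶠ[𝓝[≠] p] f) : HasIndexAt g p n := by
  obtain ⟨L, hL⟩ := hf
  refine ⟨L, ?_⟩
  filter_upwards [hL, h] with x hx hgf
  exact ⟨hx.1, hgf.trans hx.2⟩

theorem mul (hf : HasIndexAt f p m) (hg : HasIndexAt g p n) :
    HasIndexAt (fun x ↦ f x * g x) p (m + n) := by
  obtain ⟨L, hL⟩ := hf
  obtain ⟨K, hK⟩ := hg
  refine ⟨fun x ↦ L x + K x, ?_⟩
  filter_upwards [hL, hK, self_mem_nhdsWithin] with x hf hg hx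
  refine ⟨hf.1.add hg.1, ?_⟩
  rw [hf.2, hg.2, zpow_add₀ (sub_ne_zero.2 hx), Complex.exp_add]
  ring

theorem sub : HasIndexAt (fun x ↦ x - p) p 1 :=
  ⟨fun _ ↦ 0, .of_forall fun x ↦ ⟨continuousAt_const, by simp⟩⟩

-- `conj z = z⁻¹ * ‖z‖ ^ 2`, and the real factor `‖z‖ ^ 2` has a continuous logarithm off `0`.
theorem conj_comp (hf : HasIndexAt f p n) : HasIndexAt (fun x ↦ conj (f x)) p (-n) := by
  obtain ⟨L, hL⟩ := hf
  refine ⟨fun x ↦ conj (L x) + n * (2 * Real.log ‖x - p‖ : ℝ), ?_⟩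
  filter_upwards [hL, self_mem_nhdsWithin] with x hx hxp
  have hsub : x - p ≠ 0 := sub_ne_zero.2 hxp
  refine ⟨?_, ?_⟩
  · have hlog : ContinuousAt (fun y ↦ Real.log ‖y - p‖) x :=
      (continuousAt_id.sub continuousAt_const).norm.log (norm_ne_zero_iff.2 hsub)
    exact (Complex.continuous_conj.continuousAt.comp hx.1).add (continuousAt_const.mul
      (Complex.continuous_ofReal.continuousAt.comp (continuousAt_const.mul hlog)))
  · have hsq : Complex.exp (2 * Real.log ‖x - p‖ : ℝ) = (x - p) * conj (x - p) := by
      rw [Complex.mul_conj', ← Complex.ofReal_exp, two_mul, Real.exp_add,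
        Real.exp_log (norm_pos_iff.2 hsub), Complex.ofReal_mul, sq]
    rw [hx.2, Complex.exp_add, Complex.exp_int_mul, hsq, map_mul, map_zpow₀, Complex.exp_conj,
      mul_zpow, zpow_neg]
    field_simp [zpow_ne_zero n hsub]

theorem zero_of_norm_sub_lt {c : ℂ} (hcont : ∀ᶠ x in 𝓝[≠] p, ContinuousAt f x)
    (hc : ∀ᶠ x in 𝓝[≠] p, ‖f x - c‖ < ‖c‖) : HasIndexAt f p 0 := by
  refine ⟨fun x ↦ Complex.log (f x / c) + Complex.log c, ?_⟩
  filter_upwards [hcont, hc] with x hx hxc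
  have hc0 : c ≠ 0 := norm_pos_iff.1 ((norm_nonneg _).trans_lt hxc)
  have hslit : f x / c ∈ Complex.slitPlane := by
    rw [← add_sub_cancel 1 (f x / c)]
    apply Complex.mem_slitPlane_of_norm_lt_one
    rwa [div_sub_one hc0, norm_div, div_lt_one (norm_pos_iff.2 hc0)]
  refine ⟨((hx.div_const c).clog hslit).add continuousAt_const, ?_⟩
  rw [zpow_zero, one_mul, Complex.exp_add, Complex.exp_log (Complex.slitPlane_ne_zero hslit),
    Complex.exp_log hc0, div_mul_cancel₀ _ hc0]

theorem zero_of_eventually_continuousAt (hcont : ∀ᶠ x in 𝓝 p, ContinuousAt f x) (hp : f p ≠ 0) :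
    HasIndexAt f p 0 := by
  have hdist : ContinuousAt (fun x ↦ ‖f x - f p‖) p :=
    (hcont.self_of_nhds.sub continuousAt_const).norm
  exact zero_of_norm_sub_lt (hcont.filter_mono nhdsWithin_le_nhds)
    ((hdist.eventually_lt_const (by simpa using hp)).filter_mono nhdsWithin_le_nhds)

end HasIndexAt

-- Near `p`, multiply `f` by `(x - p) ^ (-n) * exp (-L x)`; the cutoff of `L` makes the exponential
-- factor trivial outside `U`.
theorem HasIndexAt.exists_removable_mul {f : ℂ → ℂ} {p : ℂ} {n : ℤ} {U : Set ℂ}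
    (hf : HasIndexAt f p n) (hU : U ∈ 𝓝 p) :
    ∃ u g : ℂ → ℂ, (∀ x ≠ p, ContinuousAt u x ∧ u x ≠ 0 ∧ g x = f x * u x) ∧
      (∀ x ∉ U, u x = (x - p) ^ (-n)) ∧ ContinuousAt g p ∧ g p ≠ 0 := by
  obtain ⟨L, hL⟩ := hf
  obtain ⟨B, hB, hBL, hB_zero⟩ :=
    exists_continuousAt_eventuallyEq_nhdsNE (hL.mono fun _ h ↦ h.1) hU
  let u : ℂ → ℂ := fun x ↦ (x - p) ^ (-n) * Complex.exp (-B x)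
  refine ⟨u, Function.update (fun x ↦ f x * u x) p 1,
    fun x hx ↦ ⟨?_, ?_, Function.update_of_ne hx _ _⟩, fun x hx ↦ by simp [u, hB_zero x hx], ?_,
    by simp⟩
  · exact ((continuousAt_id.sub continuousAt_const).zpow₀ _ (.inl (sub_ne_zero.2 hx))).mul
      (hB x hx).neg.cexp
  · exact mul_ne_zero (zpow_ne_zero _ (sub_ne_zero.2 hx)) (Complex.exp_ne_zero _)
  · refine continuousAt_update_same.2 (tendsto_const_nhds.congr' ?_)
    filter_upwards [hL, hBL, self_mem_nhdsWithin] with x hx hBx hxp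
    simp only [u]
    rw [hx.2, hBx, mul_mul_mul_comm, ← zpow_add₀ (sub_ne_zero.2 hxp), ← Complex.exp_add,
      add_neg_cancel, add_neg_cancel, zpow_zero, Complex.exp_zero, one_mul]

theorem continuousOn_of_sdiff_singleton_of_eq_mul {X M : Type*} [TopologicalSpace X] [T1Space X]
    [TopologicalSpace M] [Mul M] [ContinuousMul M] {f g u : X → M} {p : X} {S : Set X}
    (hf : ContinuousOn f (S \ {p})) (hu : ∀ x ≠ p, ContinuousAt u x)
    (hg : ∀ x ≠ p, g x = f x * u x) (hgp : ContinuousAt g p) : ContinuousOn g S := fun x hx ↦ by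
  rcases eq_or_ne x p with rfl | hxp
  · exact hgp.continuousWithinAt
  · have hfx : ContinuousWithinAt f S x := (hf x ⟨hx, hxp⟩).mono_of_mem_nhdsWithin
      (inter_mem_nhdsWithin _ (isOpen_ne.mem_nhds hxp))
    refine (hfx.mul (hu x hxp).continuousWithinAt).congr_of_eventuallyEq ?_ (hg x hxp)
    filter_upwards [mem_nhdsWithin_of_mem_nhds (isOpen_ne.mem_nhds hxp)] using hg

theorem HasWindingNumber.sum_of_hasIndexAt {Z : Finset ℂ} {n : ℂ → ℤ} {f : ℂ → ℂ}
    (hZ : ∀ p ∈ Z, p ∈ ball (0 : ℂ) 1) (hf : ContinuousOn f (closedBall 0 1 \ Z))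
    (hf0 : ∀ x ∈ closedBall (0 : ℂ) 1 \ Z, f x ≠ 0) (hn : ∀ p ∈ Z, HasIndexAt f p (n p)) :
    HasWindingNumber f (∑ p ∈ Z, n p) := by
  classical
  induction Z using Finset.induction_on generalizing f with
  | empty =>
    rw [Finset.coe_empty, Set.sdiff_empty] at hf hf0
    exact zero_of_continuousOn_closedBall hf hf0
  | insert p Z hpZ ih =>
    rw [Finset.forall_mem_insert] at hZ hn
    have hdiff : closedBall (0 : ℂ) 1 \ ↑(insert p Z) = (closedBall 0 1 \ ↑Z) \ {p} := by
      rw [Finset.coe_insert, ← Set.union_singleton, ← Set.sdiff_sdiff]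
    rw [hdiff] at hf hf0
    obtain ⟨u, g, hu, hu_sphere, hgp, hgp0⟩ :=
      hn.1.exists_removable_mul (isOpen_ball.mem_nhds hZ.1)
    have hg_near {x : ℂ} (hx : x ≠ p) : g =ᶠ[𝓝 x] fun y ↦ f y * u y := by
      filter_upwards [isOpen_ne.mem_nhds hx] with y hy using (hu y hy).2.2
    have hg_cont : ContinuousOn g (closedBall 0 1 \ Z) :=
      continuousOn_of_sdiff_singleton_of_eq_mul hf (fun x hx ↦ (hu x hx).1)
        (fun x hx ↦ (hu x hx).2.2) hgp
    have hg0 : ∀ x ∈ closedBall (0 : ℂ) 1 \ Z, g x ≠ 0 := fun x hx ↦ by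
      rcases eq_or_ne x p with rfl | hxp
      · exact hgp0
      · rw [(hu x hxp).2.2]
        exact mul_ne_zero (hf0 x ⟨hx, hxp⟩) (hu x hxp).2.1
    have hg_index : ∀ q ∈ Z, HasIndexAt g q (n q) := fun q hq ↦ by
      have hqp : q ≠ p := ne_of_mem_of_not_mem hq hpZ
      have hu_index : HasIndexAt u q 0 := .zero_of_eventually_continuousAt
        (by filter_upwards [isOpen_ne.mem_nhds hqp] with x hx using (hu x hx).1) (hu q hqp).2.1
      simpa only [add_zero] using
        ((hn.2 q hq).mul hu_index).congr ((hg_near hqp).filter_mono nhdsWithin_le_nhds)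
    rw [Finset.sum_insert hpZ]
    refine ((sub_zpow hZ.1 (n p)).mul (ih hZ.2 hg_cont hg0 hg_index)).congr fun x hx ↦ ?_
    have hx_ball : x ∉ ball (0 : ℂ) 1 := sphere_disjoint_ball.notMem_of_mem_left hx
    have hxp : x ≠ p := fun h ↦ hx_ball (h ▸ hZ.1)
    rw [(hu x hxp).2.2, hu_sphere x hx_ball, zpow_neg, mul_left_comm,
      mul_inv_cancel₀ (zpow_ne_zero _ (sub_ne_zero.2 hxp)), mul_one]

theorem exists_eq_mul_add_mul_conj (A : ℂ →L[ℝ] ℂ) :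
    ∃ a b : ℂ, (∀ v, A v = a * v + b * conj v) ∧ A.det = ‖a‖ ^ 2 - ‖b‖ ^ 2 := by
  refine ⟨(A 1 - Complex.I * A Complex.I) / 2, (A 1 + Complex.I * A Complex.I) / 2, fun v ↦ ?_, ?_⟩
  · have hv : A v = v.re • A 1 + v.im • A Complex.I := by
      rw [← map_smul, ← map_smul, ← map_add]
      congr 1
      apply Complex.ext <;> simp
    rw [hv, Complex.real_smul, Complex.real_smul]
    have hadd := Complex.add_conj v
    have hsub := Complex.sub_conj v
    push_cast at hadd hsub
    linear_combination -A 1 / 2 * hadd + Complex.I * A Complex.I / 2 * hsub +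
      A Complex.I * v.im * Complex.I_sq
  · have hdet : A.det = (A 1).re * (A Complex.I).im - (A Complex.I).re * (A 1).im := by
      rw [ContinuousLinearMap.det, ← LinearMap.det_toMatrix Complex.basisOneI, Matrix.det_fin_two]
      simp [LinearMap.toMatrix_apply]
    rw [hdet, ← Complex.normSq_eq_norm_sq, ← Complex.normSq_eq_norm_sq, Complex.normSq_apply,
      Complex.normSq_apply]
    simp only [Complex.div_ofNat_re, Complex.div_ofNat_im, Complex.add_re, Complex.add_im,
      Complex.sub_re, Complex.sub_im, Complex.mul_re, Complex.mul_im, Complex.I_re, Complex.I_im]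
    ring

-- As `‖b‖ < ‖a‖`, the quotient `f x / (x - p)` stays in a disk around `a` that avoids `0`.
theorem HasIndexAt.one_of_hasFDerivAt_of_det_pos {f : ℂ → ℂ} {A : ℂ →L[ℝ] ℂ} {p : ℂ}
    (hf : HasFDerivAt f A p) (hcont : ∀ᶠ x in 𝓝 p, ContinuousAt f x) (hp : f p = 0)
    (hA : 0 < A.det) : HasIndexAt f p 1 := by
  obtain ⟨a, b, hab, hdet⟩ := exists_eq_mul_add_mul_conj A
  have hba : ‖b‖ < ‖a‖ := lt_of_pow_lt_pow_left₀ 2 (norm_nonneg a) (by linarith)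
  have hnear : ∀ᶠ x in 𝓝[≠] p, ‖f x / (x - p) - a‖ < ‖a‖ := by
    have ho := hf.isLittleO.def (half_pos (sub_pos.2 hba))
    filter_upwards [ho.filter_mono nhdsWithin_le_nhds, self_mem_nhdsWithin] with x hx hxp
    have hsub : x - p ≠ 0 := sub_ne_zero.2 hxp
    have hpos : 0 < ‖x - p‖ := norm_pos_iff.2 hsub
    rw [div_sub' hsub, norm_div, div_lt_iff₀ hpos]
    calc ‖f x - (x - p) * a‖ = ‖(f x - f p - A (x - p)) + b * conj (x - p)‖ := by
          rw [hab, hp]; ring_nf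
      _ ≤ (‖a‖ - ‖b‖) / 2 * ‖x - p‖ + ‖b‖ * ‖x - p‖ := by
          refine (norm_add_le _ _).trans (add_le_add hx ?_)
          rw [norm_mul, Complex.norm_conj]
      _ < ‖a‖ * ‖x - p‖ := by nlinarith
  have hquot : HasIndexAt (fun x ↦ f x / (x - p)) p 0 := by
    refine .zero_of_norm_sub_lt ?_ hnear
    filter_upwards [hcont.filter_mono nhdsWithin_le_nhds, self_mem_nhdsWithin] with x hx hxp
    exact hx.div (continuousAt_id.sub continuousAt_const) (sub_ne_zero.2 hxp)
  rw [← zero_add (1 : ℤ)]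
  refine (hquot.mul .sub).congr ?_
  filter_upwards [self_mem_nhdsWithin] with x hx
  exact (div_mul_cancel₀ _ (sub_ne_zero.2 hx)).symm

theorem HasIndexAt.sign_det_of_hasFDerivAt {f : ℂ → ℂ} {A : ℂ →L[ℝ] ℂ} {p : ℂ}
    (hf : HasFDerivAt f A p) (hcont : ∀ᶠ x in 𝓝 p, ContinuousAt f x) (hp : f p = 0)
    (hA : A.det ≠ 0) : HasIndexAt f p (SignType.sign A.det) := by
  rcases lt_or_gt_of_ne hA with hneg | hpos
  · let C : ℂ →L[ℝ] ℂ := Complex.conjCLE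
    have hdet : (C ∘L A).det = -A.det := by
      have hC : LinearMap.det (C : ℂ →ₗ[ℝ] ℂ) = -1 := Complex.det_conjAe
      rw [ContinuousLinearMap.det, ContinuousLinearMap.det, ContinuousLinearMap.toLinearMap_comp,
        LinearMap.det_comp, hC, neg_one_mul]
    have hconj : HasIndexAt (fun x ↦ conj (f x)) p 1 :=
      one_of_hasFDerivAt_of_det_pos (C.hasFDerivAt.comp p hf)
        (hcont.mono fun x hx ↦ Complex.continuous_conj.continuousAt.comp hx) (by simp [hp])
        (by rw [hdet]; linarith)
    rw [sign_neg hneg]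
    simpa using hconj.conj_comp
  · rw [sign_pos hpos]
    exact one_of_hasFDerivAt_of_det_pos hf hcont hp hpos

/-! ### Crossings of integers -/

section FloorCeil

variable {α : Type*} [Ring α] [LinearOrder α] [FloorRing α] [TopologicalSpace α]
  [OrderTopology α]

theorem eventually_floor_add_ceil_intCast [IsStrictOrderedRing α] (n : ℤ) :
    ∀ᶠ y : α in 𝓝 (n : α), ⌊y⌋ + ⌈y⌉ = 2 * n + SignType.sign (y - n) := by
  have hnear : Set.Ioo (n - 1 : α) (n + 1) ∈ 𝓝 (n : α) := Ioo_mem_nhds (by simp) (by simp)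
  filter_upwards [hnear] with y hy
  rcases lt_trichotomy y n with hlt | rfl | hgt
  · have hfloor : ⌊y⌋ = n - 1 := Int.floor_eq_iff.2 ⟨by simpa using hy.1.le, by simpa using hlt⟩
    have hceil : ⌈y⌉ = n := Int.ceil_eq_iff.2 ⟨hy.1, hlt.le⟩
    rw [hfloor, hceil, sign_neg (sub_neg.2 hlt), SignType.coe_neg_one]
    ring
  · simp [two_mul]
  · have hfloor : ⌊y⌋ = n := Int.floor_eq_iff.2 ⟨hgt.le, hy.2⟩
    have hceil : ⌈y⌉ = n + 1 := Int.ceil_eq_iff.2 ⟨by simpa using hgt, by simpa using hy.2.le⟩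
    rw [hfloor, hceil, sign_pos (sub_pos.2 hgt), SignType.coe_one]
    ring

theorem eventually_floor_add_ceil_of_forall_ne_intCast {x : α} (hx : ∀ n : ℤ, x ≠ n) :
    ∀ᶠ y in 𝓝 x, ⌊y⌋ + ⌈y⌉ = ⌊x⌋ + ⌈x⌉ := by
  have hmem : x ∈ Set.Ioo (⌊x⌋ : α) (⌊x⌋ + 1) :=
    ⟨(Int.floor_le x).lt_of_ne (hx _).symm, Int.lt_floor_add_one x⟩
  have hfloor {y : α} (hy : y ∈ Set.Ioo (⌊x⌋ : α) (⌊x⌋ + 1)) : ⌊y⌋ = ⌊x⌋ :=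
    Int.floor_eq_iff.2 ⟨hy.1.le, hy.2⟩
  have hceil {y : α} (hy : y ∈ Set.Ioo (⌊x⌋ : α) (⌊x⌋ + 1)) : ⌈y⌉ = ⌊x⌋ + 1 :=
    Int.ceil_eq_iff.2 ⟨by simpa using hy.1, by simpa using hy.2.le⟩
  filter_upwards [Ioo_mem_nhds hmem.1 hmem.2] with y hy
  rw [hfloor hy, hceil hy, hceil hmem]

end FloorCeil

theorem eventually_sum_mul_sign_sub (T : Finset ℝ) (s : ℝ → ℤ) (t : ℝ) :
    ∀ᶠ u in 𝓝 t, ∑ τ ∈ T, s τ * SignType.sign (u - τ) =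
      (∑ τ ∈ T, s τ * SignType.sign (t - τ)) +
        if t ∈ T then s t * SignType.sign (u - t) else 0 := by
  have hterm (τ : ℝ) : ∀ᶠ u in 𝓝 t, s τ * (SignType.sign (u - τ) : ℤ) =
      s τ * SignType.sign (t - τ) + if t = τ then s t * SignType.sign (u - t) else 0 := by
    rcases lt_trichotomy t τ with hlt | rfl | hgt
    · filter_upwards [eventually_lt_nhds hlt] with u hu
      rw [sign_neg (sub_neg.2 hu), sign_neg (sub_neg.2 hlt), if_neg hlt.ne, add_zero]
    · exact .of_forall fun u ↦ by simp
    · filter_upwards [eventually_gt_nhds hgt] with u hu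
      rw [sign_pos (sub_pos.2 hu), sign_pos (sub_pos.2 hgt), if_neg hgt.ne', add_zero]
  filter_upwards [(eventually_all_finset T).2 fun τ _ ↦ hterm τ] with u hu
  rw [Finset.sum_congr rfl hu, Finset.sum_add_distrib, Finset.sum_ite_eq]

-- `⌊ψ⌋ + ⌈ψ⌉` jumps by `2 * s t` on crossing an integer at `t`, just as `∑ s τ * sign (· - τ)`
-- does, so their difference is locally constant.
theorem floor_add_ceil_sub_eq_two_mul_sum {ψ : ℝ → ℝ} {s : ℝ → SignType} {T : Finset ℝ} {a b : ℝ}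
    (hab : a ≤ b) (hψ : Continuous ψ) (hTab : ↑T ⊆ Set.Ioo a b)
    (hT : ∀ t ∈ Set.Icc a b, t ∈ T ↔ ∃ n : ℤ, ψ t = n)
    (hs : ∀ t ∈ T, ∀ᶠ u in 𝓝 t, SignType.sign (ψ u - ψ t) = s t * SignType.sign (u - t)) :
    (⌊ψ b⌋ + ⌈ψ b⌉) - (⌊ψ a⌋ + ⌈ψ a⌉) = 2 * ∑ t ∈ T, (s t : ℤ) := by
  let K : ℝ → ℤ := fun t ↦ ⌊ψ t⌋ + ⌈ψ t⌉ - ∑ τ ∈ T, (s τ : ℤ) * SignType.sign (t - τ)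
  have hK : ∀ t ∈ Set.Icc a b, ∀ᶠ u in 𝓝 t, K u = K t := fun t ht ↦ by
    have hsum := eventually_sum_mul_sign_sub T (fun τ ↦ s τ) t
    by_cases htT : t ∈ T
    · obtain ⟨n, hn⟩ := (hT t ht).1 htT
      have hjump := (hn ▸ hψ.tendsto t).eventually (eventually_floor_add_ceil_intCast n)
      filter_upwards [hsum, hjump, hs t htT] with u hu huK hus
      simp only [K]
      rw [hu, if_pos htT, huK, ← hn, hus, SignType.coe_mul, hn, Int.floor_intCast, Int.ceil_intCast]
      ring
    · have hjump := (hψ.tendsto t).eventually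
        (eventually_floor_add_ceil_of_forall_ne_intCast fun n hn ↦ htT ((hT t ht).2 ⟨n, hn⟩))
      filter_upwards [hsum, hjump] with u hu huK
      simp only [K]
      rw [hu, if_neg htT, huK, add_zero]
  have hKcont : ContinuousOn K (Set.Icc a b) := fun t ht ↦
    (continuousAt_const.congr (EventuallyEq.symm (hK t ht))).continuousWithinAt
  have hKab : K b = K a := isPreconnected_Icc.constant hKcont (Set.right_mem_Icc.2 hab)
    (Set.left_mem_Icc.2 hab)
  have hsum_b : ∑ τ ∈ T, (s τ : ℤ) * SignType.sign (b - τ) = ∑ τ ∈ T, (s τ : ℤ) :=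
    Finset.sum_congr rfl fun τ hτ ↦ by simp [sign_pos (sub_pos.2 (hTab hτ).2)]
  have hsum_a : ∑ τ ∈ T, (s τ : ℤ) * SignType.sign (a - τ) = -∑ τ ∈ T, (s τ : ℤ) := by
    rw [← Finset.sum_neg_distrib]
    exact Finset.sum_congr rfl fun τ hτ ↦ by simp [sign_neg (sub_neg.2 (hTab hτ).1)]
  simp only [K, hsum_a, hsum_b] at hKab
  linarith

theorem eventually_sign_eq_of_hasDerivAt {f : ℝ → ℝ} {f' t : ℝ} (hf : HasDerivAt f f' t)
    (hft : f t = 0) (hf' : f' ≠ 0) :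
    ∀ᶠ u in 𝓝 t, SignType.sign (f u) = SignType.sign f' * SignType.sign (u - t) := by
  rcases lt_or_gt_of_ne hf' with hneg | hpos
  · filter_upwards [eventually_nhdsWithin_sign_eq_of_deriv_neg (hf.deriv.trans_lt hneg) hft]
      with u hu
    rw [hu, sign_neg hneg, neg_one_mul, ← Left.sign_neg, neg_sub]
  · filter_upwards [eventually_nhdsWithin_sign_eq_of_deriv_pos (hpos.trans_eq hf.deriv.symm) hft]
      with u hu
    rw [hu, sign_pos hpos, one_mul]

theorem eventually_sign_sub_eq_of_eq_mul_sin {g R ψ : ℝ → ℝ} {g' t : ℝ} (hR : ∀ u, 0 < R u)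
    (hg : ∀ u, g u = R u * Real.sin (ψ u * π)) (hψ : ContinuousAt ψ t) (ht : g t = 0)
    (hg' : HasDerivAt g g' t) (hne : g' ≠ 0) :
    ∀ᶠ u in 𝓝 t, SignType.sign (ψ u - ψ t) =
      SignType.sign (R t * Real.cos (ψ t * π) * g') * SignType.sign (u - t) := by
  have hsin : Real.sin (ψ t * π) = 0 :=
    (mul_eq_zero.1 ((hg t).symm.trans ht)).resolve_left (hR t).ne'
  have hcos : Real.cos (ψ t * π) ≠ 0 := fun hcos ↦ by
    simpa [hsin, hcos] using Real.sin_sq_add_cos_sq (ψ t * π)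
  have hderiv : HasDerivAt (fun y ↦ Real.sin (y * π)) (Real.cos (ψ t * π) * π)
      (ψ t) := by
    simpa using ((hasDerivAt_id (ψ t)).mul_const π).sin
  have hsign_sin := hψ.eventually
    (eventually_sign_eq_of_hasDerivAt hderiv hsin (mul_ne_zero hcos Real.pi_ne_zero))
  filter_upwards [hsign_sin, eventually_sign_eq_of_hasDerivAt hg' ht hne] with u hu hgu
  have hcos_sq : SignType.sign (Real.cos (ψ t * π)) *
      SignType.sign (Real.cos (ψ t * π)) = 1 := by
    rw [← sign_mul, sign_pos (mul_self_pos.2 hcos)]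
  rw [hg u, sign_mul, sign_pos (hR u), one_mul, hu, sign_mul, sign_pos Real.pi_pos, mul_one] at hgu
  rw [sign_mul, sign_mul, sign_pos (hR t), one_mul, mul_assoc, ← hgu, ← mul_assoc, hcos_sq, one_mul]

/-! ### Tangencies with the unit circle -/

/-- `radialAcceleration F F' x` is the second derivative of `‖γ‖ ^ 2 / 2` along the trajectory `γ`
of the vector field `F` through `x`, where `F'` is the derivative of `F`. At a tangency of `F` with
a sphere centred at `0`, the tangency is interior if it is negative, exterior if it is positive. -/
def radialAcceleration {E : Type*} [NormedAddCommGroup E] [InnerProductSpace ℝ E] (F : E → E)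
    (F' : E → E →L[ℝ] E) (x : E) : ℝ :=
  ⟪F x, F x⟫ + ⟪F' x (F x), x⟫

theorem radialAcceleration_of_eq_smul {E : Type*} [NormedAddCommGroup E] [InnerProductSpace ℝ E]
    {F : E → E} {F' : E → E →L[ℝ] E} {x v : E} {c : ℝ} (h : F x = c • v) :
    radialAcceleration F F' x = c * (⟪F x, v⟫ + ⟪F' x v, x⟫) := by
  rw [radialAcceleration, h, map_smul, real_inner_smul_right, real_inner_smul_left (F' x v),
    mul_add]

theorem exists_arg_mem_Ioc (α : ℝ) :
    ∃ τ : ℂ → ℝ, (∀ x ∈ sphere (0 : ℂ) 1, τ x ∈ Set.Ioc α (α + 2 * π) ∧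
        Complex.exp (τ x * Complex.I) = x) ∧
      ∀ t ∈ Set.Ioc α (α + 2 * π), τ (Complex.exp (t * Complex.I)) = t := by
  let τ : ℂ → ℝ := fun x ↦ toIocMod Real.two_pi_pos α x.arg
  refine ⟨τ, fun x hx ↦ ⟨toIocMod_mem_Ioc .., ?_⟩, fun t ht ↦ ?_⟩
  · have hexp : Complex.exp (x.arg * Complex.I) = x := by
      simpa [mem_sphere_zero_iff_norm.1 hx] using Complex.norm_mul_exp_arg_mul_I x
    refine .trans (Complex.exp_eq_exp_iff_exists_int.2
      ⟨-toIocDiv Real.two_pi_pos α x.arg, ?_⟩) hexp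
    simp only [τ, ← self_sub_toIocDiv_zsmul, zsmul_eq_mul]
    push_cast
    ring
  · simp only [τ]
    rw [Complex.arg_exp_mul_I, toIocMod_toIocMod]
    exact (toIocMod_eq_self _).2 ht

theorem exists_finset_bijOn_exp {Γ : Finset ℂ} (hΓ : ∀ x ∈ Γ, x ∈ sphere (0 : ℂ) 1) :
    ∃ (α : ℝ) (T : Finset ℝ), ↑T ⊆ Set.Ioo α (α + 2 * π) ∧
      (∀ t ∈ Set.Icc α (α + 2 * π), t ∈ T ↔ Complex.exp (t * Complex.I) ∈ Γ) ∧
      Set.BijOn (fun t : ℝ ↦ Complex.exp (t * Complex.I)) T Γ := by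
  classical
  obtain ⟨α, hα, hαΓ⟩ := (Set.Ioc_infinite (neg_lt_self Real.pi_pos)).exists_notMem_finset
    (Γ.image Complex.arg)
  have hstart : Complex.exp (α * Complex.I) ∉ Γ := fun h ↦ hαΓ <| Finset.mem_image.2
    ⟨_, h, by rw [Complex.arg_exp_mul_I, toIocMod_eq_self]; exact ⟨hα.1, by linarith [hα.2]⟩⟩
  have hend : Complex.exp ((α + 2 * π : ℝ) * Complex.I) ∉ Γ := by
    push_cast
    rwa [add_mul, Complex.exp_add, Complex.exp_two_pi_mul_I, mul_one]
  obtain ⟨τ, hτ, hτ_exp⟩ := exists_arg_mem_Ioc α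
  have hmem : ∀ t ∈ Set.Icc α (α + 2 * π),
      t ∈ Γ.image τ ↔ Complex.exp (t * Complex.I) ∈ Γ := fun t ht ↦ by
    refine ⟨fun h ↦ ?_, fun h ↦ Finset.mem_image.2 ⟨_, h, hτ_exp t ⟨ht.1.lt_of_ne ?_, ht.2⟩⟩⟩
    · obtain ⟨x, hx, rfl⟩ := Finset.mem_image.1 h
      rwa [(hτ x (hΓ x hx)).2]
    · rintro rfl
      exact hstart h
  have hsub : ↑(Γ.image τ) ⊆ Set.Ioo α (α + 2 * π) := fun t ht ↦ by
    obtain ⟨x, hx, rfl⟩ := Finset.mem_image.1 ht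
    obtain ⟨hτx, hexp⟩ := hτ x (hΓ x hx)
    refine ⟨hτx.1, hτx.2.lt_of_ne fun h ↦ hend ?_⟩
    rwa [← h, hexp]
  refine ⟨α, Γ.image τ, hsub, hmem, fun t ht ↦ ?_, Set.LeftInvOn.injOn (f₁' := τ) fun t ht ↦ ?_,
    fun x hx ↦ ⟨τ x, Finset.mem_image_of_mem τ hx, (hτ x (hΓ x hx)).2⟩⟩
  · exact (hmem t (Set.Ioo_subset_Icc_self (hsub ht))).1 ht
  · exact hτ_exp t (Set.Ioo_subset_Ioc_self (hsub ht))

theorem hasDerivAt_inner_exp_mul_I {f : ℂ → ℂ} {A : ℂ →L[ℝ] ℂ} {t : ℝ}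
    (hf : HasFDerivWithinAt f A (sphere 0 1) (Complex.exp (t * Complex.I))) :
    HasDerivAt (fun u : ℝ ↦ ⟪f (Complex.exp (u * Complex.I)), Complex.exp (u * Complex.I)⟫)
      (⟪f (Complex.exp (t * Complex.I)), Complex.I * Complex.exp (t * Complex.I)⟫ +
        ⟪A (Complex.I * Complex.exp (t * Complex.I)), Complex.exp (t * Complex.I)⟫) t := by
  have hexp : HasDerivAt (fun u : ℝ ↦ Complex.exp (u * Complex.I))
      (Complex.I * Complex.exp (t * Complex.I)) t := by
    simpa [mul_comm] using ((hasDerivAt_id t).ofReal_comp.mul_const Complex.I).cexp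
  exact (hf.comp_hasDerivAt t hexp (.of_forall fun u ↦ by simp)).inner ℝ hexp

-- `ψ t * π` is the angle from `-I * x` to `f x`, the argument of `I * x⁻¹ * f x`, at
-- `x = exp (t * I)`; the tangencies are the integer values of `ψ`.
theorem HasWindingNumber.exists_angle_to_tangent {f : ℂ → ℂ} {n : ℤ} (hf : HasWindingNumber f n) :
    ∃ R ψ : ℝ → ℝ, (∀ t, 0 < R t) ∧ Continuous ψ ∧
      (∀ t, ψ (t + 2 * π) = ψ t + (2 * (n - 1) : ℤ)) ∧
      ∀ t : ℝ, f (Complex.exp (t * Complex.I)) =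
        (R t * Real.sin (ψ t * π)) • Complex.exp (t * Complex.I) +
        -(R t * Real.cos (ψ t * π)) • (Complex.I * Complex.exp (t * Complex.I)) := by
  obtain ⟨R, θ, hR, hθ, hθ_per, hpolar⟩ :=
    ((const_mul_zpow Complex.I_ne_zero (-1)).mul hf).exists_polar
  refine ⟨R, fun t ↦ θ t / π, hR, hθ.div_const _, fun t ↦ ?_, fun t ↦ ?_⟩
  · beta_reduce
    rw [hθ_per]
    push_cast
    field_simp
    ring
  · set x := Complex.exp (t * Complex.I)
    have hx : x ≠ 0 := Complex.exp_ne_zero _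
    have h : Complex.I * x⁻¹ * f x =
        R t * (Complex.cos (θ t) + Complex.sin (θ t) * Complex.I) := by
      rw [← Complex.exp_mul_I, ← hpolar, zpow_neg_one]
    rw [div_mul_cancel₀ _ Real.pi_ne_zero]
    calc f x = -(Complex.I * Complex.I) * (x * x⁻¹) * f x := by
          rw [Complex.I_mul_I, mul_inv_cancel₀ hx, neg_neg, one_mul, one_mul]
      _ = -(Complex.I * x) * (Complex.I * x⁻¹ * f x) := by ring
      _ = _ := by
          rw [h]
          simp only [Complex.real_smul]
          push_cast
          linear_combination -(R t * Complex.sin (θ t) * x) * Complex.I_sq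

theorem inner_smul_add_smul_I_mul {x : ℂ} (hx : ‖x‖ = 1) (a b : ℝ) :
    ⟪a • x + b • (Complex.I * x), x⟫ = a := by
  have horth : ⟪Complex.I * x, x⟫ = 0 := by
    rw [Complex.inner]
    simp only [map_mul, Complex.conj_I, Complex.mul_re, Complex.mul_im, Complex.neg_re,
      Complex.neg_im, Complex.I_re, Complex.I_im, Complex.conj_re, Complex.conj_im]
    ring
  rw [inner_add_left, real_inner_smul_left, real_inner_smul_left, horth,
    real_inner_self_eq_norm_sq, hx, one_pow, mul_one, mul_zero, add_zero]

theorem HasWindingNumber.two_mul_sub_one_eq_neg_sum {f : ℂ → ℂ} {f' : ℂ → ℂ →L[ℝ] ℂ} {n : ℤ}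
    {Γ : Finset ℂ} (hf : HasWindingNumber f n)
    (hΓ : ∀ x, x ∈ Γ ↔ x ∈ sphere (0 : ℂ) 1 ∧ ⟪f x, x⟫ = 0)
    (hf' : ∀ x ∈ Γ, HasFDerivWithinAt f (f' x) (sphere 0 1) x)
    (hacc : ∀ x ∈ Γ, radialAcceleration f f' x ≠ 0) :
    2 * (n - 1) = -∑ x ∈ Γ, (SignType.sign (radialAcceleration f f' x) : ℤ) := by
  obtain ⟨R, ψ, hR, hψ, hψ_per, hf_eq⟩ := hf.exists_angle_to_tangent
  obtain ⟨α, T, hT, hTΓ, hbij⟩ := exists_finset_bijOn_exp fun x hx ↦ ((hΓ x).1 hx).1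
  let X : ℝ → ℂ := fun t ↦ Complex.exp (t * Complex.I)
  have hX (t : ℝ) : X t ∈ sphere (0 : ℂ) 1 := by simp [X]
  have hradial (t : ℝ) : ⟪f (X t), X t⟫ = R t * Real.sin (ψ t * π) := by
    rw [hf_eq t, inner_smul_add_smul_I_mul (mem_sphere_zero_iff_norm.1 (hX t))]
  have hint : ∀ t ∈ Set.Icc α (α + 2 * π), t ∈ T ↔ ∃ k : ℤ, ψ t = k := fun t ht ↦ by
    rw [hTΓ t ht, hΓ, and_iff_right (hX t), hradial, mul_eq_zero, or_iff_right (hR t).ne',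
      Real.sin_eq_zero_iff]
    simp only [mul_left_inj' Real.pi_ne_zero, eq_comm]
  have hcross : ∀ t ∈ T, ∀ᶠ u in 𝓝 t, SignType.sign (ψ u - ψ t) =
      SignType.sign (-radialAcceleration f f' (X t)) * SignType.sign (u - t) := fun t ht ↦ by
    have hXΓ : X t ∈ Γ := hbij.mapsTo ht
    have hzero := ((hΓ _).1 hXΓ).2
    have hf_tangent : f (X t) = -(R t * Real.cos (ψ t * π)) • (Complex.I * X t) := by
      rw [hf_eq t, ← hradial, hzero, zero_smul, zero_add]
    have hacc_eq := radialAcceleration_of_eq_smul (F' := f') hf_tangent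
    rw [neg_mul] at hacc_eq
    have hderiv_ne := right_ne_zero_of_mul (neg_ne_zero.1 (hacc_eq ▸ hacc _ hXΓ))
    rw [hacc_eq, neg_neg]
    exact eventually_sign_sub_eq_of_eq_mul_sin hR hradial hψ.continuousAt hzero
      (hasDerivAt_inner_exp_mul_I (hf' _ hXΓ)) hderiv_ne
  have hcount := floor_add_ceil_sub_eq_two_mul_sum (by linarith [Real.pi_pos]) hψ hT hint hcross
  rw [hψ_per, Int.floor_add_intCast, Int.ceil_add_intCast] at hcount
  have hsum : ∑ t ∈ T, (SignType.sign (-radialAcceleration f f' (X t)) : ℤ) =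
      -∑ x ∈ Γ, (SignType.sign (radialAcceleration f f' x) : ℤ) := by
    rw [← Finset.sum_neg_distrib]
    exact Finset.sum_nbij X hbij.mapsTo hbij.injOn hbij.surjOn fun t _ ↦ by
      rw [Left.sign_neg, SignType.coe_neg]
  rw [hsum] at hcount
  linarith

/-! ### Poincaré's formula -/

theorem two_mul_sum_sign_det_eq_of_complex {f : ℂ → ℂ} {f' : ℂ → ℂ →L[ℝ] ℂ} {Z Γ : Finset ℂ}
    (hf : ContinuousOn f (closedBall 0 1))
    (hZ : ∀ x, x ∈ Z ↔ x ∈ closedBall (0 : ℂ) 1 ∧ f x = 0)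
    (hΓ : ∀ x, x ∈ Γ ↔ x ∈ sphere (0 : ℂ) 1 ∧ ⟪f x, x⟫ = 0)
    (hf' : ∀ x, x ∈ Z ∨ x ∈ Γ → HasFDerivWithinAt f (f' x) (closedBall 0 1) x)
    (hdet : ∀ x ∈ Z, (f' x).det ≠ 0) (hacc : ∀ x ∈ Γ, radialAcceleration f f' x ≠ 0) :
    2 * ∑ x ∈ Z, (SignType.sign (f' x).det : ℤ) =
      2 - ∑ x ∈ Γ, (SignType.sign (radialAcceleration f f' x) : ℤ) := by
  have hZ_ball : ∀ x ∈ Z, x ∈ ball (0 : ℂ) 1 := fun x hx ↦ by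
    obtain ⟨hx_ball, hfx⟩ := (hZ x).1 hx
    refine (mem_closedBall.1 hx_ball).lt_of_ne fun hx_sphere ↦ ?_
    exact hacc x ((hΓ x).2 ⟨hx_sphere, by rw [hfx, inner_zero_left]⟩)
      (by simp [radialAcceleration, hfx])
  have hindex : ∀ x ∈ Z, HasIndexAt f x (SignType.sign (f' x).det) := fun x hx ↦ by
    have hnhds : closedBall (0 : ℂ) 1 ∈ 𝓝 x := closedBall_mem_nhds_of_mem (hZ_ball x hx)
    refine .sign_det_of_hasFDerivAt ((hf' x (.inl hx)).hasFDerivAt hnhds) ?_ ((hZ x).1 hx).2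
      (hdet x hx)
    filter_upwards [isOpen_ball.mem_nhds (hZ_ball x hx)] with y hy
    exact hf.continuousAt (closedBall_mem_nhds_of_mem hy)
  have hwinding := HasWindingNumber.sum_of_hasIndexAt hZ_ball (hf.mono Set.sdiff_subset)
    (fun x hx hfx ↦ hx.2 ((hZ x).2 ⟨hx.1, hfx⟩)) hindex
  have htangency := hwinding.two_mul_sub_one_eq_neg_sum hΓ
    (fun x hx ↦ (hf' x (.inr hx)).mono sphere_subset_closedBall) hacc
  linarith

section Conjugation

variable {E V : Type*} [NormedAddCommGroup E] [InnerProductSpace ℝ E] [NormedAddCommGroup V]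
  [InnerProductSpace ℝ V]

theorem radialAcceleration_conj (e : V ≃ₗᵢ[ℝ] E) (F : E → E) (F' : E → E →L[ℝ] E) (x : V) :
    radialAcceleration (fun y ↦ e.symm (F (e y))) (fun y ↦ e.symm ∘L F' (e y) ∘L e) x =
      radialAcceleration F F' (e x) := by
  simp [radialAcceleration, e.symm.inner_map_eq_flip]

theorem two_mul_sum_sign_det_eq (hE : Module.finrank ℝ E = 2) {F : E → E} {F' : E → E →L[ℝ] E}
    {Z Γ : Finset E} (hF : ContinuousOn F (closedBall 0 1))
    (hZ : ∀ x, x ∈ Z ↔ x ∈ closedBall (0 : E) 1 ∧ F x = 0)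
    (hΓ : ∀ x, x ∈ Γ ↔ x ∈ sphere (0 : E) 1 ∧ ⟪F x, x⟫ = 0)
    (hF' : ∀ x, x ∈ Z ∨ x ∈ Γ → HasFDerivWithinAt F (F' x) (closedBall 0 1) x)
    (hdet : ∀ x ∈ Z, (F' x).det ≠ 0) (hacc : ∀ x ∈ Γ, radialAcceleration F F' x ≠ 0) :
    2 * ∑ x ∈ Z, (SignType.sign (F' x).det : ℤ) =
      2 - ∑ x ∈ Γ, (SignType.sign (radialAcceleration F F' x) : ℤ) := by
  have : FiniteDimensional ℝ E := Module.finite_of_finrank_eq_succ hE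
  let e : ℂ ≃ₗᵢ[ℝ] E :=
    Complex.isometryOfOrthonormal ((stdOrthonormalBasis ℝ E).reindex (finCongr hE))
  let f' : ℂ → ℂ →L[ℝ] ℂ := fun x ↦ e.symm ∘L F' (e x) ∘L e
  have hmem (S : Finset E) (x : ℂ) : x ∈ S.map e.symm.toEquiv.toEmbedding ↔ e x ∈ S := by
    simp [Finset.mem_map_equiv]
  have hmaps : Set.MapsTo e (closedBall 0 1) (closedBall 0 1) := fun x hx ↦ by simpa using hx
  have hdet_conj (x : ℂ) : (f' x).det = (F' (e x)).det :=
    LinearMap.det_conj (F' (e x) : E →ₗ[ℝ] E) e.symm.toLinearEquiv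
  have hcomplex := two_mul_sum_sign_det_eq_of_complex (f := fun x ↦ e.symm (F (e x))) (f' := f')
    (Z := Z.map e.symm.toEquiv.toEmbedding) (Γ := Γ.map e.symm.toEquiv.toEmbedding)
    (e.symm.continuous.comp_continuousOn (hF.comp e.continuous.continuousOn hmaps))
    (fun x ↦ by rw [hmem, hZ]; simp) (fun x ↦ by rw [hmem, hΓ, e.symm.inner_map_eq_flip]; simp)
    (fun x hx ↦ ?_) (fun x hx ↦ ?_) (fun x hx ↦ ?_)
  · have happly_symm (v : E) : e (e.symm.toEquiv v) = v := e.apply_symm_apply v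
    simpa only [Finset.sum_map, hdet_conj, f', radialAcceleration_conj, Equiv.coe_toEmbedding,
      happly_symm] using hcomplex
  · rw [hmem, hmem] at hx
    exact e.symm.toContinuousLinearEquiv.hasFDerivAt.comp_hasFDerivWithinAt x
      ((hF' (e x) hx).comp x e.toContinuousLinearEquiv.hasFDerivWithinAt hmaps)
  · rw [hdet_conj]
    exact hdet _ ((hmem Z x).1 hx)
  · rw [radialAcceleration_conj]
    exact hacc _ ((hmem Γ x).1 hx)

end Conjugation

theorem real_sign_eq_intCast_sign (r : ℝ) : Real.sign r = (SignType.sign r : ℤ) := by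
  rcases lt_trichotomy r 0 with h | rfl | h <;> simp [*, Real.sign_of_neg, Real.sign_of_pos]

theorem stmt8_general {E : Type*} [NormedAddCommGroup E] [InnerProductSpace ℝ E]
    (hE : Module.finrank ℝ E = 2) {F : E → E} {F' : E → E →L[ℝ] E} {Z Γi Γe : Finset E}
    (hF : ContinuousOn F (closedBall 0 1))
    (hF' : ∀ x, x ∈ Z ∨ x ∈ Γi ∨ x ∈ Γe → HasFDerivWithinAt F (F' x) (closedBall 0 1) x)
    (hZ : ∀ x, x ∈ Z ↔ x ∈ closedBall (0 : E) 1 ∧ F x = 0)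
    (hnd : ∀ p ∈ Z, (F' p).det ≠ 0)
    (hΓ : ∀ x, x ∈ Γi ∨ x ∈ Γe ↔ x ∈ sphere (0 : E) 1 ∧ ⟪F x, x⟫ = 0)
    (hint : ∀ x ∈ Γi, radialAcceleration F F' x < 0)
    (hext : ∀ x ∈ Γe, 0 < radialAcceleration F F' x) :
    ∑ p ∈ Z, Real.sign (F' p).det = 1 + ((Γi.card : ℝ) - Γe.card) / 2 := by
  classical
  have hdisj : Disjoint Γi Γe :=
    Finset.disjoint_left.2 fun x hi he ↦ (hint x hi).asymm (hext x he)
  have hacc : ∀ x ∈ Γi ∪ Γe, radialAcceleration F F' x ≠ 0 := fun x hx ↦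
    (Finset.mem_union.1 hx).elim (fun hi ↦ (hint x hi).ne) fun he ↦ (hext x he).ne'
  have hsigned := two_mul_sum_sign_det_eq (Γ := Γi ∪ Γe) hE hF hZ
    (fun x ↦ by rw [Finset.mem_union, hΓ]) (fun x ↦ by rw [Finset.mem_union]; exact hF' x) hnd hacc
  have hsum_int : ∑ x ∈ Γi, (SignType.sign (radialAcceleration F F' x) : ℤ) = -Γi.card := by
    simp [Finset.sum_congr rfl fun x hx ↦ congrArg ((↑) : SignType → ℤ) (sign_neg (hint x hx))]
  have hsum_ext : ∑ x ∈ Γe, (SignType.sign (radialAcceleration F F' x) : ℤ) = Γe.card := by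
    simp [Finset.sum_congr rfl fun x hx ↦ congrArg ((↑) : SignType → ℤ) (sign_pos (hext x hx))]
  rw [Finset.sum_union hdisj, hsum_int, hsum_ext] at hsigned
  have hreal : 2 * ∑ p ∈ Z, Real.sign (F' p).det = 2 - (-(Γi.card : ℝ) + Γe.card) := by
    simp only [real_sign_eq_intCast_sign]
    exact_mod_cast hsigned
  linarith

/-- Poincaré's formula (Pugh's generalization of Poincaré–Hopf on
the disk): for a C¹ vector field `F` on the closed unit disk `D² ⊂ ℝ²` with no
zeros on the boundary circle, only nondegenerate interior zeros, and only
generic tangencies with the boundary (interior tangencies `Γi`, where the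
second derivative of the squared distance along the flow is negative, and
exterior tangencies `Γe`, where it is positive), the sum of the indices of the
zeros equals `1 + (i - e)/2`. -/
theorem stmt8 (F : EuclideanSpace ℝ (Fin 2) → EuclideanSpace ℝ (Fin 2))
    (hF : ContDiff ℝ 1 F)
    (hFb : ∀ x ∈ Metric.sphere (0 : EuclideanSpace ℝ (Fin 2)) 1, F x ≠ 0)
    (Z : Finset (EuclideanSpace ℝ (Fin 2)))
    (hZ : ∀ x, x ∈ Z ↔ (x ∈ Metric.closedBall (0 : EuclideanSpace ℝ (Fin 2)) 1 ∧ F x = 0))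
    (hnd : ∀ p ∈ Z, (fderiv ℝ F p).det ≠ 0)
    (Γi Γe : Finset (EuclideanSpace ℝ (Fin 2)))
    (hdisj : Disjoint Γi Γe)
    (hΓ : ∀ x, (x ∈ Γi ∨ x ∈ Γe) ↔
      (x ∈ Metric.sphere (0 : EuclideanSpace ℝ (Fin 2)) 1 ∧ ⟪F x, x⟫ = 0))
    (hint : ∀ x ∈ Γi, ⟪F x, F x⟫ + ⟪fderiv ℝ F x (F x), x⟫ < 0)
    (hext : ∀ x ∈ Γe, 0 < ⟪F x, F x⟫ + ⟪fderiv ℝ F x (F x), x⟫) :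
    ∑ p ∈ Z, Real.sign ((fderiv ℝ F p).det)
      = 1 + ((Γi.card : ℝ) - (Γe.card : ℝ)) / 2 :=
  stmt8_general finrank_euclideanSpace_fin hF.continuous.continuousOn
    (fun x _ ↦ (hF.differentiable one_ne_zero x).hasFDerivAt.hasFDerivWithinAt) hZ hnd hΓ hint hext
end
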